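/- Let z ∈ ℝⁿ with 0 < z₁ ≤ … ≤ zₙ, θ > 0, fix 1 ≤ k < n, and set b_k = ∑_{i=1}^k zᵢ, λ* = (θ b_k + √(θ² b_k² + 4k))/(2k). Then the condition θ z_k ≤ λ* < θ z_{k+1} holds if and only if θ² (k z_k² − b_k z_k) ≤ 1 < θ² (k z_{k+1}² − b_k z_{k+1}). -/

import Mathlib

theorem stmt_4 (n : ℕ) (z : ℕ → ℝ)
    (hpos : ∀ i, 1 ≤ i → i ≤ n → 0 < z i)
    (hsort : ∀ i, 1 ≤ i → i < n → z i ≤ z (i + 1))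
    (θ : ℝ) (hθ : 0 < θ)
    (k : ℕ) (hk1 : 1 ≤ k) (hkn : k < n)
    (b lam : ℝ)
    (hb : b = ∑ i ∈ Finset.Icc 1 k, z i)
    (hlam : lam = (θ * b + Real.sqrt (θ ^ 2 * b ^ 2 + 4 * k)) / (2 * k)) :
    (θ * z k ≤ lam ∧ lam < θ * z (k + 1)) ↔
      (θ ^ 2 * (k * z k ^ 2 - b * z k) ≤ 1 ∧
        1 < θ ^ 2 * (k * z (k + 1) ^ 2 - b * z (k + 1))) := by
  have hk : (0 : ℝ) < k := by exact_mod_cast hk1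
  have hb0 : 0 ≤ b := by
    rw [hb]
    refine Finset.sum_nonneg fun i hi => ?_
    rw [Finset.mem_Icc] at hi
    exact (hpos i hi.1 (by omega)).le
  have hD : 0 < θ ^ 2 * b ^ 2 + 4 * k := by positivity
  have hs := Real.sq_sqrt hD.le
  have hs0 := Real.sqrt_pos.mpr hD
  set s := Real.sqrt (θ ^ 2 * b ^ 2 + 4 * k) with hsdef
  have hl0 : 0 < lam := by rw [hlam]; positivity
  have hs2 : s = 2 * k * lam - θ * b := by
    rw [hlam]; field_simp; ring
  have hq : k * lam ^ 2 - θ * b * lam = 1 := by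
    rw [hs2] at hs
    have : (4 * k : ℝ) * (k * lam ^ 2 - θ * b * lam - 1) = 0 := by linear_combination hs
    rcases mul_eq_zero.mp this with h | h
    · linarith
    · linarith
  have key : ∀ x : ℝ, 0 < x → (θ * x ≤ lam ↔ θ ^ 2 * (k * x ^ 2 - b * x) ≤ 1) := by
    intro x hx
    have hc : 0 < k * (θ * x) * lam + 1 := by positivity
    have he : (θ ^ 2 * (k * x ^ 2 - b * x) - 1) * lam
        = (θ * x - lam) * (k * (θ * x) * lam + 1) := by
      linear_combination (θ * x) * hq
    constructor
    · intro h
      by_contra! h2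
      have := mul_pos (sub_pos.mpr h2) hl0
      have := mul_nonneg (sub_nonneg.mpr h) hc.le
      linarith
    · intro h
      by_contra! h2
      have := mul_pos (sub_pos.mpr h2) hc
      have := mul_nonneg (sub_nonneg.mpr h) hl0.le
      linarith
  have h1 := key (z k) (hpos k hk1 hkn.le)
  have h2 := key (z (k + 1)) (hpos (k + 1) (by omega) hkn)
  rw [h1, ← not_le, h2, not_le]
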